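/- arXiv:2303.12632 — 3 statements merged into one kernel-verified Lean document; each statement's English description precedes it below -/
import Mathlib

section
/- Let Δ be a positive integer and let G be a finite simple graph with n ≥ 1 vertices, m edges, and maximum degree at most Δ. Let d = ⌊Δm/(Δn−m)⌋. Then irr(G) ≤ d(d+1)·n + (1/Δ)·(Δ² − (2d+1)Δ − d² − d)·m. -/
open Finset SimpleGraph

/-- The irregularity of a graph: `irr G = ∑_{uv ∈ E(G)} |d_G(u) - d_G(v)|`. -/
def irr {V : Type*} [Fintype V] (G : SimpleGraph V) [DecidableRel G.Adj] : ℤ :=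
  ∑ e ∈ G.edgeFinset, Sym2.lift ⟨fun u v => |(G.degree u : ℤ) - (G.degree v : ℤ)|,
    fun u v => by simp [abs_sub_comm]⟩ e

/-!
For an integer `d`, the product `(a - d) * (a - d - 1)` is nonnegative at every integer `a`. If
`a > 0`, dividing it by `a` gives `2 * d + 1 - a ≤ d * (d + 1) / a`. Let an edge have end degrees
`a ≤ b ≤ Δ`. Adding `b ≤ Δ` and `0 ≤ d * (d + 1) * (1 / b - 1 / Δ)` to this inequality yields
`b - a ≤ d * (d + 1) * (1 / a + 1 / b) + (Δ - (2 * d + 1) - d * (d + 1) / Δ)`.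
Summing over the edges proves the bound, because each vertex of positive degree receives `1 / deg`
from each of its `deg` edges and so contributes `1` to the sum of the reciprocals.
-/

theorem int_mul_add_one_nonneg (k : ℤ) : 0 ≤ k * (k + 1) := by
  linarith [Int.le_self_sq (-k)]

section OrderedField

variable {K : Type*} [Field K] [LinearOrder K] [IsStrictOrderedRing K]

theorem two_mul_add_one_sub_le_mul_add_one_div {a : ℤ} (ha : 0 < a) (d : ℤ) :
    2 * (d : K) + 1 - a ≤ d * (d + 1) / a := by
  have consecutive : (0 : K) ≤ (a - d - 1) * (a - d - 1 + 1) := by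
    exact_mod_cast int_mul_add_one_nonneg (a - d - 1)
  rw [le_div_iff₀ (Int.cast_pos.2 ha)]
  linarith

theorem abs_sub_le_mul_inv_add_inv {a b : ℤ} (ha : 0 < a) (hb : 0 < b) {D : K}
    (haD : (a : K) ≤ D) (hbD : (b : K) ≤ D) (d : ℤ) :
    |(a : K) - b| ≤
      d * (d + 1) * ((a : K)⁻¹ + (b : K)⁻¹) + (D - (2 * d + 1) - d * (d + 1) / D) := by
  wlog hab : a ≤ b generalizing a b
  · rw [abs_sub_comm, add_comm (a : K)⁻¹]
    exact this hb ha hbD haD (le_of_not_ge hab)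
  have coeff_nonneg : (0 : K) ≤ d * (d + 1) := by exact_mod_cast int_mul_add_one_nonneg d
  have small_end : 2 * (d : K) + 1 - a ≤ d * (d + 1) * (a : K)⁻¹ := by
    simpa only [div_eq_mul_inv] using two_mul_add_one_sub_le_mul_add_one_div (K := K) ha d
  have large_end : d * (d + 1) / D ≤ d * (d + 1) * (b : K)⁻¹ := by
    simpa only [div_eq_mul_inv] using
      div_le_div_of_nonneg_left coeff_nonneg (Int.cast_pos.2 hb) hbD
  rw [abs_sub_comm, abs_of_nonneg (sub_nonneg.2 (Int.cast_le.2 hab))]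
  linarith

end OrderedField

section Graph

variable {V : Type*} [Fintype V] (G : SimpleGraph V) [DecidableRel G.Adj]

theorem sum_edgeFinset_sum_toFinset [DecidableEq V] {M : Type*} [AddCommMonoid M] (f : V → M) :
    ∑ e ∈ G.edgeFinset, ∑ v ∈ e.toFinset, f v = ∑ v, G.degree v • f v := by
  have swap : ∑ e ∈ G.edgeFinset, ∑ v ∈ e.toFinset, f v =
      ∑ v, ∑ _e ∈ G.incidenceFinset v, f v :=
    sum_comm' fun e v => by simp [G.incidenceFinset_eq_filter]
  simpa only [sum_const, card_incidenceFinset_eq_degree] using swap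

theorem sum_edgeFinset_sum_inv_degree_le_card [DecidableEq V] (K : Type*) [Field K]
    [LinearOrder K] [IsStrictOrderedRing K] :
    ∑ e ∈ G.edgeFinset, ∑ v ∈ e.toFinset, (G.degree v : K)⁻¹ ≤ Fintype.card V := by
  calc
    _ = ∑ v, (G.degree v : K) * (G.degree v : K)⁻¹ := by
      simp only [sum_edgeFinset_sum_toFinset, nsmul_eq_mul]
    _ ≤ ∑ _v : V, 1 := sum_le_sum fun _ _ => mul_inv_le_one
    _ = Fintype.card V := by simp

theorem irr_le_sum_edgeFinset [DecidableEq V] {Δ : ℝ} (hmax : ∀ v, (G.degree v : ℝ) ≤ Δ)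
    (d : ℤ) :
    (irr G : ℝ) ≤ ∑ e ∈ G.edgeFinset, (d * (d + 1) * ∑ v ∈ e.toFinset, (G.degree v : ℝ)⁻¹ +
      (Δ - (2 * d + 1) - d * (d + 1) / Δ)) := by
  rw [irr, Int.cast_sum]
  refine sum_le_sum fun e he => ?_
  induction e using Sym2.ind with
  | _ u v =>
    have huv : G.Adj u v := by simpa using he
    have hu : 0 < G.degree u := G.degree_pos_iff_exists_adj u |>.2 ⟨v, huv⟩
    have hv : 0 < G.degree v := G.degree_pos_iff_exists_adj v |>.2 ⟨u, huv.symm⟩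
    rw [Sym2.lift_mk, Sym2.toFinset_mk_eq, sum_pair huv.ne]
    simpa using abs_sub_le_mul_inv_add_inv (Int.natCast_pos.2 hu) (Int.natCast_pos.2 hv)
      (hmax u) (hmax v) d

theorem stmt_1_general {Δ : ℝ} (hΔ : 0 < Δ) (hmax : ∀ v, (G.degree v : ℝ) ≤ Δ) (d : ℤ) :
    (irr G : ℝ) ≤ d * (d + 1) * Fintype.card V +
      1 / Δ * (Δ ^ 2 - (2 * d + 1) * Δ - d ^ 2 - d) * #G.edgeFinset := by
  classical
  have coeff_nonneg : (0 : ℝ) ≤ d * (d + 1) := by exact_mod_cast int_mul_add_one_nonneg d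
  calc
    (irr G : ℝ) ≤ ∑ e ∈ G.edgeFinset, (d * (d + 1) * ∑ v ∈ e.toFinset, (G.degree v : ℝ)⁻¹ +
        (Δ - (2 * d + 1) - d * (d + 1) / Δ)) := irr_le_sum_edgeFinset G hmax d
    _ = d * (d + 1) * ∑ e ∈ G.edgeFinset, ∑ v ∈ e.toFinset, (G.degree v : ℝ)⁻¹ +
        (Δ - (2 * d + 1) - d * (d + 1) / Δ) * #G.edgeFinset := by
      rw [sum_add_distrib, ← mul_sum, sum_const, nsmul_eq_mul, mul_comm (#G.edgeFinset : ℝ)]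
    _ ≤ d * (d + 1) * Fintype.card V +
        (Δ - (2 * d + 1) - d * (d + 1) / Δ) * #G.edgeFinset := by
      gcongr
      exact sum_edgeFinset_sum_inv_degree_le_card G ℝ
    _ = d * (d + 1) * Fintype.card V +
        1 / Δ * (Δ ^ 2 - (2 * d + 1) * Δ - d ^ 2 - d) * #G.edgeFinset := by
      field_simp
      ring

end Graph

theorem stmt_1 {V : Type*} [Fintype V] [Nonempty V] (G : SimpleGraph V) [DecidableRel G.Adj]
    (Δ : ℕ) (hΔ : 0 < Δ)
    (hmax : ∀ v : V, G.degree v ≤ Δ)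
    (n : ℝ) (hn : n = (Fintype.card V : ℝ))
    (m : ℝ) (hm : m = (G.edgeFinset.card : ℝ))
    (d : ℤ) (hd : d = ⌊(Δ : ℝ) * m / ((Δ : ℝ) * n - m)⌋) :
    (irr G : ℝ) ≤ (d : ℝ) * (d + 1) * n +
      (1 / (Δ : ℝ)) * ((Δ : ℝ) ^ 2 - (2 * d + 1) * Δ - (d : ℝ) ^ 2 - d) * m := by
  subst hn hm
  exact stmt_1_general G (Nat.cast_pos.2 hΔ) (fun v => Nat.cast_le.2 (hmax v)) d
end

section
/- Let Δ and d be integers with 0 ≤ d ≤ Δ−1. The complete bipartite graph K_{Δ,d+1}, which has n = Δ+d+1 vertices, m = Δ(d+1) edges, and maximum degree Δ, satisfies 2Δd/(Δ+d) ≤ 2m/n ≤ 2Δ(d+1)/(Δ+d+1) and irr(K_{Δ,d+1}) = d(d+1)·n + (1/Δ)·(Δ² − (2d+1)Δ − d² − d)·m, i.e., the bound of the main theorem holds with equality for K_{Δ,d+1} with parameter d. -/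
open Finset SimpleGraph

instance {α β : Type*} : DecidableRel (completeBipartiteGraph α β).Adj := fun v w => by
  simp only [completeBipartiteGraph]; infer_instance

theorem irr_eq_card_edgeFinset_mul_of_forall_adj {V : Type*} [Fintype V] {G : SimpleGraph V}
    [DecidableRel G.Adj] {c : ℤ}
    (h : ∀ u v, G.Adj u v → |(G.degree u : ℤ) - G.degree v| = c) :
    irr G = #G.edgeFinset * c := by
  rw [← nsmul_eq_mul]
  refine sum_eq_card_nsmul fun e he ↦ ?_
  induction e with
  | h u v => exact h u v (by simpa only [mem_edgeFinset, mem_edgeSet] using he)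

section CompleteBipartiteGraph

variable {V W : Type*}

theorem degree_completeBipartiteGraph_inl [Fintype W] (v : V)
    [Fintype ((completeBipartiteGraph V W).neighborSet (Sum.inl v))] :
    (completeBipartiteGraph V W).degree (Sum.inl v) = Fintype.card W := by
  have neighborFinset_eq :
      (completeBipartiteGraph V W).neighborFinset (Sum.inl v) = univ.map .inr := by
    ext (x | x) <;> simp
  rw [← card_neighborFinset_eq_degree, neighborFinset_eq, card_map, card_univ]

theorem degree_completeBipartiteGraph_inr [Fintype V] (w : W)
    [Fintype ((completeBipartiteGraph V W).neighborSet (Sum.inr w))] :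
    (completeBipartiteGraph V W).degree (Sum.inr w) = Fintype.card V := by
  have neighborFinset_eq :
      (completeBipartiteGraph V W).neighborFinset (Sum.inr w) = univ.map .inl := by
    ext (x | x) <;> simp
  rw [← card_neighborFinset_eq_degree, neighborFinset_eq, card_map, card_univ]

variable [Fintype V] [Fintype W]

theorem card_edgeFinset_completeBipartiteGraph [Fintype (completeBipartiteGraph V W).edgeSet] :
    #(completeBipartiteGraph V W).edgeFinset = Fintype.card V * Fintype.card W := by
  have encard_eq := encard_edgeSet_completeBipartiteGraph (W₁ := V) (W₂ := W)
  rw [← coe_edgeFinset, Set.encard_coe_eq_coe_finsetCard, ENat.card_eq_coe_fintype_card,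
    ENat.card_eq_coe_fintype_card] at encard_eq
  exact_mod_cast encard_eq

theorem irr_completeBipartiteGraph :
    irr (completeBipartiteGraph V W) =
      Fintype.card V * Fintype.card W * |(Fintype.card V : ℤ) - Fintype.card W| := by
  rw [irr_eq_card_edgeFinset_mul_of_forall_adj (c := |(Fintype.card V : ℤ) - Fintype.card W|),
    card_edgeFinset_completeBipartiteGraph, Nat.cast_mul]
  rintro (u | u) (v | v) huv
  · simp at huv
  · rw [degree_completeBipartiteGraph_inl, degree_completeBipartiteGraph_inr, abs_sub_comm]
  · rw [degree_completeBipartiteGraph_inl, degree_completeBipartiteGraph_inr]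
  · simp at huv

end CompleteBipartiteGraph

theorem div_add_le_div_add_of_le {K : Type*} [Field K] [LinearOrder K] [IsStrictOrderedRing K]
    {a x y : K} (ha : 0 < a) (hx : 0 ≤ x) (hxy : x ≤ y) :
    x / (a + x) ≤ y / (a + y) := by
  have hy : 0 ≤ y := hx.trans hxy
  rw [div_le_div_iff₀ (by positivity) (by positivity)]
  calc x * (a + y) = a * x + x * y := by ring
    _ ≤ a * y + x * y := by gcongr
    _ = y * (a + x) := by ring

theorem stmt_12 (Δ d : ℕ) (hdΔ : d < Δ)
    (n m : ℕ) (hn : n = Δ + d + 1) (hm : m = Δ * (d + 1)) :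
    Fintype.card (Fin Δ ⊕ Fin (d + 1)) = n ∧
    (completeBipartiteGraph (Fin Δ) (Fin (d + 1))).edgeFinset.card = m ∧
    (∀ v, (completeBipartiteGraph (Fin Δ) (Fin (d + 1))).degree v ≤ Δ) ∧
    (∃ v, (completeBipartiteGraph (Fin Δ) (Fin (d + 1))).degree v = Δ) ∧
    2 * (Δ : ℝ) * d / ((Δ : ℝ) + d) ≤ 2 * (m : ℝ) / n ∧
    2 * (m : ℝ) / n ≤ 2 * (Δ : ℝ) * (d + 1) / ((Δ : ℝ) + d + 1) ∧
    (irr (completeBipartiteGraph (Fin Δ) (Fin (d + 1))) : ℝ) =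
      (d : ℝ) * (d + 1) * n +
        (1 / (Δ : ℝ)) * ((Δ : ℝ) ^ 2 - (2 * d + 1) * Δ - (d : ℝ) ^ 2 - d) * m := by
  have hΔ : (0 : ℝ) < Δ := mod_cast (Nat.zero_le d).trans_lt hdΔ
  have hd : (d : ℝ) + 1 ≤ Δ := mod_cast hdΔ
  have average_eq : 2 * (m : ℝ) / n = 2 * Δ * (d + 1) / (Δ + d + 1) := by
    rw [hm, hn]; push_cast; ring
  have irr_eq : (irr (completeBipartiteGraph (Fin Δ) (Fin (d + 1))) : ℝ) =
      Δ * (d + 1) * (Δ - (d + 1)) := by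
    rw [irr_completeBipartiteGraph, Fintype.card_fin, Fintype.card_fin]
    push_cast
    rw [abs_of_nonneg (sub_nonneg.mpr hd)]
  refine ⟨by simp [hn, add_assoc], by simp [card_edgeFinset_completeBipartiteGraph, hm], ?_,
    ⟨Sum.inr 0, by simp [degree_completeBipartiteGraph_inr]⟩, ?_, average_eq.le, ?_⟩
  · rintro (v | w)
    · simpa [degree_completeBipartiteGraph_inl] using hdΔ
    · simp [degree_completeBipartiteGraph_inr]
  · rw [average_eq, mul_div_assoc, mul_div_assoc, add_assoc]
    refine mul_le_mul_of_nonneg_left ?_ (by positivity)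
    exact div_add_le_div_add_of_le hΔ d.cast_nonneg (le_add_of_nonneg_right zero_le_one)
  · rw [irr_eq, hn, hm]
    push_cast
    field_simp
    ring
end

section
/- Let Δ be a positive integer and let x be a real number such that x ≥ Δ(Δ−k)k/(Δ+k) for every integer k with 1 ≤ k ≤ Δ. Then x ≥ 0, and x/i + x/j ≥ j − i for all integers 1 ≤ i < j ≤ Δ. -/
/-! The inequality `b - a ≤ x / a + x / b` says that `x` is at least `f b`, where
`f t = t (t - a) a / (t + a)`. As `f` increases on `[a, ∞)`, the strongest of these constraints,
for fixed `a`, is the one at the largest admissible `b`. -/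

section OrderedField

variable {K : Type*} [Field K] [LinearOrder K] [IsStrictOrderedRing K] {a b x D : K}

theorem sub_le_div_add_div_iff (ha : 0 < a) (hb : 0 < b) :
    b - a ≤ x / a + x / b ↔ b * (b - a) * a / (b + a) ≤ x := by
  have sum_eq : x / a + x / b = x * (b + a) / (b * a) := by field_simp
  rw [sum_eq, le_div_iff₀ (mul_pos hb ha), div_le_iff₀ (add_pos hb ha)]
  ring_nf

theorem monotoneOn_sub_div_add (ha : 0 < a) :
    MonotoneOn (fun t ↦ (t - a) / (t + a)) (Set.Ici a) := by
  intro s hs t ht hst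
  have hs_pos : 0 < s + a := add_pos (ha.trans_le hs) ha
  have ht_pos : 0 < t + a := add_pos (ha.trans_le ht) ha
  have eq_one_sub {r : K} (hr : 0 < r + a) : (r - a) / (r + a) = 1 - 2 * a / (r + a) := by
    field_simp
    ring
  simp only [eq_one_sub hs_pos, eq_one_sub ht_pos]
  gcongr

theorem monotoneOn_mul_sub_mul_div_add (ha : 0 < a) :
    MonotoneOn (fun t ↦ t * (t - a) * a / (t + a)) (Set.Ici a) := by
  have ratio_nonneg : ∀ t ∈ Set.Ici a, 0 ≤ (t - a) / (t + a) := fun t ht ↦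
    div_nonneg (sub_nonneg.2 ht) (add_pos (ha.trans_le ht) ha).le
  have mul_ratio_mono : MonotoneOn (fun t ↦ t * ((t - a) / (t + a))) (Set.Ici a) :=
    monotoneOn_id.mul (monotoneOn_sub_div_add ha) (fun _ ht ↦ ha.le.trans ht) ratio_nonneg
  refine ((monotone_mul_right_of_nonneg ha.le).comp_monotoneOn mul_ratio_mono).congr fun t _ ↦ ?_
  simp only [Function.comp_apply]
  ring

theorem sub_le_div_add_div_of_le (ha : 0 < a) (hab : a ≤ b) (hbD : b ≤ D)
    (hx : D * (D - a) * a / (D + a) ≤ x) : b - a ≤ x / a + x / b :=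
  (sub_le_div_add_div_iff ha (ha.trans_le hab)).2 <|
    (monotoneOn_mul_sub_mul_div_add ha hab (hab.trans hbD) hbD).trans hx

theorem stmt_19_general {s : Set K} (hs : ∀ a ∈ s, 0 < a) (hD : IsGreatest s D)
    (hx : ∀ a ∈ s, D * (D - a) * a / (D + a) ≤ x) :
    0 ≤ x ∧ ∀ a ∈ s, ∀ b ∈ s, a ≤ b → b - a ≤ x / a + x / b :=
  ⟨by simpa using hx D hD.1, fun a ha _ hb hab ↦
    sub_le_div_add_div_of_le (hs a ha) hab (hD.2 hb) (hx a ha)⟩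

end OrderedField

theorem stmt_19 (Δ : ℕ) (hΔ : 0 < Δ) (x : ℝ)
    (hx : ∀ k : ℕ, 1 ≤ k → k ≤ Δ →
      (Δ : ℝ) * ((Δ : ℝ) - k) * k / ((Δ : ℝ) + k) ≤ x) :
    0 ≤ x ∧ ∀ i j : ℕ, 1 ≤ i → i < j → j ≤ Δ → x / i + x / j ≥ (j : ℝ) - i := by
  have h := stmt_19_general (s := (Nat.cast : ℕ → ℝ) '' Set.Icc 1 Δ) (x := x)
    (Set.forall_mem_image.2 fun _ hk ↦ Nat.cast_pos.2 hk.1)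
    (Nat.mono_cast.map_isGreatest (isGreatest_Icc hΔ))
    (Set.forall_mem_image.2 fun k hk ↦ hx k hk.1 hk.2)
  refine ⟨h.1, fun i j hi hij hj ↦ ?_⟩
  exact h.2 i ⟨i, ⟨hi, hij.le.trans hj⟩, rfl⟩ j ⟨j, ⟨hi.trans hij.le, hj⟩, rfl⟩
    (Nat.cast_le.2 hij.le)
end
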